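/- Suppose p = m, f₀ and h₀ are twice continuously differentiable, assumptions (A2), (A4), (A5) hold, and the reachability assumption holds: for every x̃ ∈ ℝⁿ, yʳ ∈ 𝒵ˢ_{y,lin}(x̃), so that the minimizer of ‖yˢ − yʳ‖_S² over 𝒵ˢ_{y,lin}(x̃) is yʳ itself and the associated steady state is (xˢʳ_lin(x̃), uˢʳ_lin(x̃)) = M_x̃^{−1}·(−e_x̃ ; yʳ − r_x̃) with M_x̃ := [A_x̃ − I, B; C_x̃, D]. Let (xˢʳ,uˢʳ) ∈ 𝒵ˢ be a nonlinear steady state with h(xˢʳ,uˢʳ) = yʳ. Then for every compact set X ⊂ ℝⁿ with ℬ ⊆ X×𝕌 there exist constants c_{eq,1}, c_{eq,2} > 0 such that for all x̂ ∈ X: c_{eq,1}‖x̂ − xˢʳ_lin(x̂)‖₂² ≤ ‖x̂ − xˢʳ‖₂² ≤ c_{eq,2}‖x̂ − xˢʳ_lin(x̂)‖₂². -/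

import Mathlib

open Matrix

noncomputable section

def en {k : ℕ} (x : Fin k → ℝ) : ℝ := Real.sqrt (∑ i, x i ^ 2)

def qn {k : ℕ} (P : Matrix (Fin k) (Fin k) ℝ) (x : Fin k → ℝ) : ℝ :=
  x ⬝ᵥ P.mulVec x

def jac {n q : ℕ} (g : (Fin n → ℝ) → Fin q → ℝ) (xt : Fin n → ℝ) :
    Matrix (Fin q) (Fin n) ℝ :=
  LinearMap.toMatrix' (fderiv ℝ g xt).toLinearMap

def fdyn {n m : ℕ} (f0 : (Fin n → ℝ) → Fin n → ℝ) (B : Matrix (Fin n) (Fin m) ℝ)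
    (x : Fin n → ℝ) (u : Fin m → ℝ) : Fin n → ℝ :=
  f0 x + B.mulVec u

def hout {n p m : ℕ} (h0 : (Fin n → ℝ) → Fin p → ℝ) (D : Matrix (Fin p) (Fin m) ℝ)
    (x : Fin n → ℝ) (u : Fin m → ℝ) : Fin p → ℝ :=
  h0 x + D.mulVec u

def flin {n m : ℕ} (f0 : (Fin n → ℝ) → Fin n → ℝ) (B : Matrix (Fin n) (Fin m) ℝ)
    (xt x : Fin n → ℝ) (u : Fin m → ℝ) : Fin n → ℝ :=
  (jac f0 xt).mulVec x + B.mulVec u + (f0 xt - (jac f0 xt).mulVec xt)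

def hlin {n p m : ℕ} (h0 : (Fin n → ℝ) → Fin p → ℝ) (D : Matrix (Fin p) (Fin m) ℝ)
    (xt x : Fin n → ℝ) (u : Fin m → ℝ) : Fin p → ℝ :=
  (jac h0 xt).mulVec x + D.mulVec u + (h0 xt - (jac h0 xt).mulVec xt)

def Zlin {n m : ℕ} (f0 : (Fin n → ℝ) → Fin n → ℝ) (B : Matrix (Fin n) (Fin m) ℝ)
    (Us : Set (Fin m → ℝ)) (xt : Fin n → ℝ) : Set ((Fin n → ℝ) × (Fin m → ℝ)) :=
  {z | z.2 ∈ Us ∧ z.1 = flin f0 B xt z.1 z.2}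

def Zs {n m : ℕ} (f0 : (Fin n → ℝ) → Fin n → ℝ) (B : Matrix (Fin n) (Fin m) ℝ)
    (Us : Set (Fin m → ℝ)) : Set ((Fin n → ℝ) × (Fin m → ℝ)) :=
  {z | z.2 ∈ Us ∧ z.1 = fdyn f0 B z.1 z.2}

def A2holds {n m p : ℕ} (f0 : (Fin n → ℝ) → Fin n → ℝ) (h0 : (Fin n → ℝ) → Fin p → ℝ)
    (B : Matrix (Fin n) (Fin m) ℝ) (D : Matrix (Fin p) (Fin m) ℝ) (σs : ℝ) : Prop :=
  ∀ (xt v : Fin n → ℝ) (w : Fin m → ℝ),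
    σs * Real.sqrt (en v ^ 2 + en w ^ 2) ≤
      Real.sqrt (en ((jac f0 xt).mulVec v - v + B.mulVec w) ^ 2 +
        en ((jac h0 xt).mulVec v + D.mulVec w) ^ 2)

def A3holds {n m : ℕ} (f0 : (Fin n → ℝ) → Fin n → ℝ) (B : Matrix (Fin n) (Fin m) ℝ)
    (μ : ℝ) : Prop :=
  ∀ (xt w : Fin n → ℝ),
    μ * en w ≤ Real.sqrt (∑ k ∈ Finset.range n, en ((jac f0 xt ^ k * B)ᵀ.mulVec w) ^ 2)

def A4holds {n : ℕ} (f0 : (Fin n → ℝ) → Fin n → ℝ) (σl : ℝ) : Prop :=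
  ∀ xt v : Fin n → ℝ, σl * en v ≤ en (v - (jac f0 xt).mulVec v)

open scoped unitInterval NNReal

section GlobalInverse

variable {E : Type*} [NormedAddCommGroup E] [NormedSpace ℝ E] [FiniteDimensional ℝ E]

lemma exists_equiv_of_antilipschitz {T : E →L[ℝ] E} {c : ℝ} (hc : 0 < c)
    (hT : ∀ v, c * ‖v‖ ≤ ‖T v‖) :
    ∃ e : E ≃L[ℝ] E, (e : E →L[ℝ] E) = T ∧ ∀ w, ‖e.symm w‖ ≤ ‖w‖ / c := by
  have hinj : Function.Injective (T : E →ₗ[ℝ] E) := by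
    rw [injective_iff_map_eq_zero]
    intro v hv
    have h := hT v
    rw [show T v = 0 from hv, norm_zero] at h
    exact norm_le_zero_iff.1 (nonpos_of_mul_nonpos_right h hc)
  let e : E ≃L[ℝ] E := (LinearEquiv.ofInjectiveEndo (T : E →ₗ[ℝ] E) hinj).toContinuousLinearEquiv
  have he : (e : E →L[ℝ] E) = T := by
    ext v
    rfl
  refine ⟨e, he, fun w => ?_⟩
  rw [le_div_iff₀ hc, mul_comm]
  have h := hT (e.symm w)
  rwa [← he, ContinuousLinearEquiv.coe_coe, e.apply_symm_apply] at h

variable {F : E → E} {c : ℝ}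

/-- A globally bounded `C¹` vector field can be integrated over `[0, 1]`. -/
lemma exists_solution_of_contDiff_of_bounded {v : E → E} (hv : ContDiff ℝ 1 v) {R : ℝ}
    (hR : ∀ z, ‖v z‖ ≤ R) (z₀ : E) :
    ∃ α : ℝ → E, α 0 = z₀ ∧
      ∀ t ∈ Set.Icc (0 : ℝ) 1, HasDerivWithinAt α (v (α t)) (Set.Icc 0 1) t := by
  have hR0 : 0 ≤ R := (norm_nonneg _).trans (hR z₀)
  lift R to ℝ≥0 using hR0
  obtain ⟨K, hK⟩ := (hv.contDiffOn (s := Metric.closedBall z₀ R)).exists_lipschitzOnWith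
    one_ne_zero (convex_closedBall _ _) (isCompact_closedBall _ _)
  have hP : IsPicardLindelof (fun _ => v) (⟨0, by simp⟩ : Set.Icc (0 : ℝ) 1) z₀ R 0 R K :=
    { lipschitzOnWith := fun _ _ => hK
      continuousOn := fun _ _ => continuousOn_const
      norm_le := fun _ _ z _ => hR z
      mul_max_le := by simp }
  exact hP.exists_eq_forall_mem_Icc_hasDerivWithinAt₀

/-- Segments in the target of a map with uniformly expanding derivative can be lifted. -/
lemma exists_lift_segment (hF : ContDiff ℝ 2 F) (hc : 0 < c)
    (hd : ∀ z v, c * ‖v‖ ≤ ‖fderiv ℝ F z v‖) (z₀ w : E) :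
    ∃ α : ℝ → E, α 0 = z₀ ∧ ContinuousOn α (Set.Icc 0 1) ∧
      (∀ t ∈ Set.Icc (0 : ℝ) 1, F (α t) = F z₀ + t • w) ∧
      ∀ t ∈ Set.Icc (0 : ℝ) 1, ‖α t - z₀‖ ≤ ‖w‖ / c * t := by
  choose e he hbound using fun z => exists_equiv_of_antilipschitz hc (hd z)
  have hv : ContDiff ℝ 1 fun z => (e z).symm w := by
    have h : (fun z => (e z).symm w) = fun z => (fderiv ℝ F z).inverse w := by
      funext z
      rw [← he z, ContinuousLinearMap.inverse_equiv]
      rfl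
    rw [h]
    refine ContDiff.clm_apply (contDiff_iff_contDiffAt.2 fun z => ?_) contDiff_const
    have hinv : ContDiffAt ℝ 1 ContinuousLinearMap.inverse (fderiv ℝ F z) := by
      rw [← he z]
      exact contDiffAt_map_inverse (e z)
    exact hinv.comp z (hF.fderiv_right (m := 1) (by norm_num)).contDiffAt
  obtain ⟨α, hα0, hα⟩ := exists_solution_of_contDiff_of_bounded hv (fun z => hbound z w) z₀
  have hFα : ∀ t ∈ Set.Icc (0 : ℝ) 1,
      HasDerivWithinAt (fun t => F (α t) - t • w) 0 (Set.Icc 0 1) t := by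
    intro t ht
    have h₁ := ((hF.differentiable (by norm_num)) (α t)).hasFDerivAt.comp_hasDerivWithinAt t
      (hα t ht)
    have h₂ : fderiv ℝ F (α t) ((e (α t)).symm w) = w := by
      rw [← he]
      exact (e (α t)).apply_symm_apply w
    rw [h₂] at h₁
    have h₃ := h₁.sub ((hasDerivWithinAt_id t (Set.Icc 0 1)).smul_const w)
    simpa [Function.comp_def, Pi.sub_def] using h₃
  refine ⟨α, hα0, fun t ht => (hα t ht).continuousWithinAt, fun t ht => ?_, fun t ht => ?_⟩
  · have h := norm_image_sub_le_of_norm_deriv_le_segment' hFα (C := 0) (by simp) t ht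
    rw [zero_mul, norm_le_zero_iff, hα0, zero_smul, sub_zero, sub_sub, sub_eq_zero] at h
    rw [h, add_comm]
  · have h := norm_image_sub_le_of_norm_deriv_le_segment' hα (fun t _ => hbound _ w) t ht
    rwa [hα0, sub_zero] at h

/-- A form of the Hadamard global inverse function theorem: a `C²` map whose derivative expands
all norms by at least `c` does the same for distances. -/
theorem dist_le_of_fderiv_expanding (hF : ContDiff ℝ 2 F) (hc : 0 < c)
    (hd : ∀ z v, c * ‖v‖ ≤ ‖fderiv ℝ F z v‖) (z z' : E) :
    ‖z - z'‖ ≤ ‖F z - F z'‖ / c := by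
  have hhomeo : IsLocalHomeomorph F := IsLocalHomeomorph.mk F fun x => by
    obtain ⟨e, he, -⟩ := exists_equiv_of_antilipschitz hc (hd x)
    have hx : HasFDerivAt F (e : E →L[ℝ] E) x := by
      rw [he]
      exact (hF.differentiable (by norm_num) x).hasFDerivAt
    refine ⟨hF.contDiffAt.toOpenPartialHomeomorph F hx (by norm_num),
      hF.contDiffAt.mem_toOpenPartialHomeomorph_source hx (by norm_num), fun _ _ => rfl⟩
  have hsep : IsSeparatedMap F := T2Space.isSeparatedMap F
  choose α hα0 hαc hαF hαb using fun x => exists_lift_segment hF hc hd x (F z' - F x)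
  let f : C(I × E, E) := ⟨fun p => F p.2 + (p.1 : ℝ) • (F z' - F p.2), by
    have := hF.continuous
    fun_prop⟩
  have hcont : Continuous fun p : I × E => α p.2 p.1 :=
    hhomeo.continuous_lift hsep f (funext fun p => hαF p.2 p.1 p.1.2)
      (by simp only [Set.Icc.coe_zero, hα0]; exact continuous_id)
      (fun x => (hαc x).comp_continuous continuous_subtype_val fun t => t.2)
  have hend : ∀ x, F (α x 1) = F z' := fun x => by
    rw [hαF x 1 (by simp), one_smul, add_sub_cancel]
  have hconst : α z 1 = α z' 1 :=
    hsep.const_of_comp hhomeo.isLocallyInjective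
      (hcont.comp (Continuous.prodMk_right (1 : I))) (fun a a' => by simp [hend]) z z'
  have hz' : α z' 1 = z' := by
    have h := hαb z' 1 (by simp)
    rwa [sub_self, norm_zero, zero_div, zero_mul, norm_le_zero_iff, sub_eq_zero] at h
  have h := hαb z 1 (by simp)
  rwa [hconst, hz', mul_one, norm_sub_rev, norm_sub_rev (F z')] at h

end GlobalInverse

/-- One Newton step towards the solution `(xs, us)` of `G x + L u = y` moves the first component
by an amount comparable with the distance to `xs`, locally uniformly. -/
theorem newton_step_equiv_error {V W : Type*} [NormedAddCommGroup V] [NormedSpace ℝ V]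
    [FiniteDimensional ℝ V] [NormedAddCommGroup W] [NormedSpace ℝ W] [FiniteDimensional ℝ W]
    {G : V → V × W} (hG : ContDiff ℝ 2 G) (L : W →L[ℝ] V × W) {c : ℝ} (hc : 0 < c)
    (hd : ∀ x v w, c * ‖(v, w)‖ ≤ ‖fderiv ℝ G x v + L w‖) {y : V × W}
    {xl : V → V} {ul : V → W} (hl : ∀ x, G x + fderiv ℝ G x (xl x - x) + L (ul x) = y)
    {xs : V} {us : W} (hs : G xs + L us = y) {X : Set V} (hX : IsCompact X) :
    ∃ K : ℝ, ∀ x ∈ X, ‖x - xl x‖ ≤ K * ‖x - xs‖ ∧ ‖x - xs‖ ≤ K * ‖x - xl x‖ := by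
  obtain ⟨r, hr⟩ := hX.isBounded.subset_closedBall xs
  obtain ⟨K₁, hK₁⟩ := (hG.contDiffOn (s := Metric.closedBall xs (max r 0))).exists_lipschitzOnWith
    two_ne_zero (convex_closedBall _ _) (isCompact_closedBall _ _)
  obtain ⟨K₂, hK₂⟩ := hX.exists_bound_of_continuousOn
    (hG.continuous_fderiv (by norm_num)).continuousOn
  let F : V × W → V × W := fun z => G z.1 + L z.2
  have hF : ContDiff ℝ 2 F := (hG.comp contDiff_fst).add (L.contDiff.comp contDiff_snd)
  have hFd : ∀ z v, fderiv ℝ F z v = fderiv ℝ G z.1 v.1 + L v.2 := by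
    intro z v
    have h : HasFDerivAt F ((fderiv ℝ G z.1).comp (ContinuousLinearMap.fst ℝ V W) +
        L.comp (ContinuousLinearMap.snd ℝ V W)) z :=
      ((hG.differentiable (by norm_num) z.1).hasFDerivAt.comp z hasFDerivAt_fst).add
        (L.hasFDerivAt.comp z hasFDerivAt_snd)
    rw [h.fderiv]
    rfl
  refine ⟨max (K₁ / c) (K₂ / c), fun x hx => ⟨?_, ?_⟩⟩
  · refine le_trans ?_ (mul_le_mul_of_nonneg_right (le_max_left _ _) (norm_nonneg _))
    have h₁ : c * ‖x - xl x‖ ≤ K₁ * ‖x - xs‖ := by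
      calc c * ‖x - xl x‖ ≤ c * ‖(xl x - x, ul x - us)‖ := by
            rw [norm_sub_rev]
            exact mul_le_mul_of_nonneg_left (norm_fst_le (xl x - x, ul x - us)) hc.le
        _ ≤ ‖fderiv ℝ G x (xl x - x) + L (ul x - us)‖ := hd _ _ _
        _ = ‖G x - G xs‖ := by
            rw [norm_sub_rev (G x), eq_sub_iff_add_eq.2 hs, ← hl x, map_sub L]
            congr 1
            abel
        _ ≤ K₁ * ‖x - xs‖ := hK₁.norm_sub_le
            (Metric.closedBall_subset_closedBall (le_max_left _ _) (hr hx))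
            (Metric.mem_closedBall_self (le_max_right _ _))
    rwa [div_mul_eq_mul_div, le_div_iff₀ hc, mul_comm]
  · refine le_trans ?_ (mul_le_mul_of_nonneg_right (le_max_right _ _) (norm_nonneg _))
    calc ‖x - xs‖ ≤ ‖(x, ul x) - (xs, us)‖ := norm_fst_le ((x, ul x) - (xs, us))
      _ ≤ ‖F (x, ul x) - F (xs, us)‖ / c :=
          dist_le_of_fderiv_expanding hF hc (fun z v => by rw [hFd]; exact hd _ _ _) _ _
      _ = ‖fderiv ℝ G x (x - xl x)‖ / c := by
          congr 2
          change G x + L (ul x) - (G xs + L us) = _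
          rw [hs, ← hl x, ← neg_sub x, map_neg]
          abel
      _ ≤ K₂ * ‖x - xl x‖ / c :=
          div_le_div_of_nonneg_right ((fderiv ℝ G x).le_of_opNorm_le (hK₂ x hx) _) hc.le
      _ = K₂ / c * ‖x - xl x‖ := by ring

lemma en_sq {k : ℕ} (x : Fin k → ℝ) : en x ^ 2 = ∑ i, x i ^ 2 :=
  Real.sq_sqrt (Finset.sum_nonneg fun _ _ => sq_nonneg _)

lemma norm_le_en {k : ℕ} (x : Fin k → ℝ) : ‖x‖ ≤ en x := by
  refine (pi_norm_le_iff_of_nonneg (Real.sqrt_nonneg _)).2 fun i => Real.le_sqrt_of_sq_le ?_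
  rw [Real.norm_eq_abs, sq_abs]
  exact Finset.single_le_sum (f := fun i => x i ^ 2) (fun _ _ => sq_nonneg _) (Finset.mem_univ i)

lemma en_sq_le {k : ℕ} (x : Fin k → ℝ) : en x ^ 2 ≤ k * ‖x‖ ^ 2 := by
  rw [en_sq]
  calc ∑ i, x i ^ 2 ≤ ∑ _i : Fin k, ‖x‖ ^ 2 := Finset.sum_le_sum fun i _ => by
        rw [← sq_abs]
        exact pow_le_pow_left₀ (abs_nonneg _) (norm_le_pi_norm x i) 2
    _ = k * ‖x‖ ^ 2 := by simp

lemma jac_mulVec {n q : ℕ} (g : (Fin n → ℝ) → Fin q → ℝ) (x v : Fin n → ℝ) :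
    (jac g x).mulVec v = fderiv ℝ g x v := by
  rw [jac, LinearMap.toMatrix'_mulVec]
  rfl

lemma A2holds.norm_le {n m p : ℕ} {f0 : (Fin n → ℝ) → Fin n → ℝ} {h0 : (Fin n → ℝ) → Fin p → ℝ}
    {B : Matrix (Fin n) (Fin m) ℝ} {D : Matrix (Fin p) (Fin m) ℝ} {σs : ℝ} (hσs : 0 < σs)
    (h : A2holds f0 h0 B D σs) (x v : Fin n → ℝ) (w : Fin m → ℝ) :
    σs / √(n + p + 1) * ‖(v, w)‖ ≤
      ‖((jac f0 x).mulVec v - v + B.mulVec w, (jac h0 x).mulVec v + D.mulVec w)‖ := by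
  have hN : (0 : ℝ) < n + p + 1 := by positivity
  rw [div_mul_eq_mul_div, div_le_iff₀ (Real.sqrt_pos.2 hN)]
  have h₁ : ‖(v, w)‖ ≤ √(en v ^ 2 + en w ^ 2) := by
    refine max_le ?_ ?_ <;> refine (norm_le_en _).trans (Real.le_sqrt_of_sq_le ?_)
    · exact le_add_of_nonneg_right (sq_nonneg _)
    · exact le_add_of_nonneg_left (sq_nonneg _)
  refine (mul_le_mul_of_nonneg_left h₁ hσs.le).trans ((h x v w).trans ?_)
  generalize (jac f0 x).mulVec v - v + B.mulVec w = a
  generalize (jac h0 x).mulVec v + D.mulVec w = b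
  refine Real.sqrt_le_iff.2 ⟨by positivity, ?_⟩
  rw [mul_pow, Real.sq_sqrt hN.le]
  have ha : ‖a‖ ^ 2 ≤ ‖(a, b)‖ ^ 2 := pow_le_pow_left₀ (norm_nonneg _) (norm_fst_le (a, b)) 2
  have hb : ‖b‖ ^ 2 ≤ ‖(a, b)‖ ^ 2 := pow_le_pow_left₀ (norm_nonneg _) (norm_snd_le (a, b)) 2
  have ha' := mul_le_mul_of_nonneg_left ha (Nat.cast_nonneg (α := ℝ) n)
  have hb' := mul_le_mul_of_nonneg_left hb (Nat.cast_nonneg (α := ℝ) p)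
  linarith [en_sq_le a, en_sq_le b, sq_nonneg ‖(a, b)‖]

lemma en_sq_le_of_norm_le {k : ℕ} {a b : Fin k → ℝ} {K : ℝ} (h : ‖a‖ ≤ K * ‖b‖) :
    en a ^ 2 ≤ (k * K ^ 2 + 1) * en b ^ 2 := by
  have h₁ : ‖a‖ ^ 2 ≤ K ^ 2 * en b ^ 2 := by
    calc ‖a‖ ^ 2 ≤ (K * ‖b‖) ^ 2 := pow_le_pow_left₀ (norm_nonneg _) h 2
      _ = K ^ 2 * ‖b‖ ^ 2 := mul_pow _ _ _
      _ ≤ K ^ 2 * en b ^ 2 := mul_le_mul_of_nonneg_left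
          (pow_le_pow_left₀ (norm_nonneg _) (norm_le_en b) 2) (sq_nonneg K)
  have h₂ := mul_le_mul_of_nonneg_left h₁ (Nat.cast_nonneg (α := ℝ) k)
  linarith [en_sq_le a, sq_nonneg (en b)]

/-- Proposition on sufficient conditions for Assumption 6 (`p = m`, reachable
setpoint): under (A2), (A4), (A5) and reachability (`yʳ` is the optimal reachable
output of every linearization, with associated steady state
`(xˢʳ_lin(x̃), uˢʳ_lin(x̃))`), the distance of `x̂` to the optimal reachable steady
state `xˢʳ` of the nonlinear system is equivalent, on any compact `X ⊇` the
steady-state manifold, to the distance of `x̂` to `xˢʳ_lin(x̂)`. -/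
theorem stmt7 {n m : ℕ} (f0 : (Fin n → ℝ) → Fin n → ℝ)
    (h0 : (Fin n → ℝ) → Fin m → ℝ)
    (B : Matrix (Fin n) (Fin m) ℝ) (D : Matrix (Fin m) (Fin m) ℝ)
    (U Us : Set (Fin m → ℝ))
    (hU : IsCompact U) (hUs : IsCompact Us) (hUsconv : Convex ℝ Us)
    (hUsint : Us ⊆ interior U)
    (hf0 : ContDiff ℝ 2 f0) (hh0 : ContDiff ℝ 2 h0)
    (σs : ℝ) (hσs : 0 < σs) (hA2 : A2holds f0 h0 B D σs)
    (σl : ℝ) (hσl : 0 < σl) (hA4 : A4holds f0 σl)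
    (𝓑 : Set ((Fin n → ℝ) × (Fin m → ℝ))) (h𝓑 : IsCompact 𝓑)
    (hA5 : ∀ xt : Fin n → ℝ, Zlin f0 B Us xt ⊆ 𝓑)
    (yr : Fin m → ℝ)
    -- reachability: for every linearization point the setpoint `yʳ` is an output
    -- steady state of the linearized dynamics, attained at `(xsrlin x̃, usrlin x̃)`
    (xsrlin : (Fin n → ℝ) → Fin n → ℝ) (usrlin : (Fin n → ℝ) → Fin m → ℝ)
    (hreach : ∀ xt : Fin n → ℝ, (xsrlin xt, usrlin xt) ∈ Zlin f0 B Us xt ∧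
      hlin h0 D xt (xsrlin xt) (usrlin xt) = yr)
    -- nonlinear optimal reachable steady state with output `yʳ`
    (xsr : Fin n → ℝ) (usr : Fin m → ℝ)
    (hxsr : (xsr, usr) ∈ Zs f0 B Us ∧ hout h0 D xsr usr = yr) :
    ∀ X : Set (Fin n → ℝ), IsCompact X → 𝓑 ⊆ Set.prod X U →
      ∃ ceq1 ceq2 : ℝ, 0 < ceq1 ∧ 0 < ceq2 ∧
        ∀ xh ∈ X,
          ceq1 * en (xh - xsrlin xh) ^ 2 ≤ en (xh - xsr) ^ 2 ∧
          en (xh - xsr) ^ 2 ≤ ceq2 * en (xh - xsrlin xh) ^ 2 := by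
  intro X hX _
  let G : (Fin n → ℝ) → (Fin n → ℝ) × (Fin m → ℝ) := fun x => (f0 x - x, h0 x)
  let L : (Fin m → ℝ) →L[ℝ] (Fin n → ℝ) × (Fin m → ℝ) :=
    (LinearMap.toContinuousLinearMap B.mulVecLin).prod
      (LinearMap.toContinuousLinearMap D.mulVecLin)
  have hL : ∀ w, L w = (B.mulVec w, D.mulVec w) := fun _ => rfl
  have hG : ContDiff ℝ 2 G := (hf0.sub contDiff_id).prodMk hh0
  have hGd : ∀ x v, fderiv ℝ G x v = ((jac f0 x).mulVec v - v, (jac h0 x).mulVec v) := by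
    intro x v
    have h : HasFDerivAt G (((fderiv ℝ f0 x) - ContinuousLinearMap.id ℝ _).prod
        (fderiv ℝ h0 x)) x :=
      ((hf0.differentiable (by norm_num) x).hasFDerivAt.sub (hasFDerivAt_id x)).prodMk
        (hh0.differentiable (by norm_num) x).hasFDerivAt
    rw [h.fderiv, jac_mulVec, jac_mulVec]
    rfl
  have hl : ∀ x, G x + fderiv ℝ G x (xsrlin x - x) + L (usrlin x) = (0, yr) := by
    intro x
    obtain ⟨⟨-, hx⟩, hy⟩ := hreach x
    simp only [flin] at hx
    rw [hGd, hL, ← hy]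
    refine Prod.ext ?_ ?_
    · simp only [G, Prod.fst_add, Matrix.mulVec_sub]
      rw [← sub_eq_zero.2 hx.symm]
      abel
    · simp only [G, hlin, Prod.snd_add, Matrix.mulVec_sub]
      abel
  have hs : G xsr + L usr = (0, yr) := by
    obtain ⟨⟨-, hx⟩, hy⟩ := hxsr
    simp only [fdyn] at hx
    rw [hL, ← hy]
    refine Prod.ext ?_ rfl
    simp only [G, Prod.fst_add]
    rw [← sub_eq_zero.2 hx.symm]
    abel
  obtain ⟨K, hK⟩ := newton_step_equiv_error hG L
    (c := σs / √(n + m + 1)) (by positivity)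
    (fun x v w => by rw [hGd, hL]; exact hA2.norm_le hσs x v w) hl hs hX
  have hpos : 0 < n * K ^ 2 + 1 := by positivity
  refine ⟨(n * K ^ 2 + 1)⁻¹, n * K ^ 2 + 1, inv_pos.2 hpos, hpos, fun x hx => ⟨?_, ?_⟩⟩
  · rw [inv_mul_le_iff₀ hpos]
    exact en_sq_le_of_norm_le (hK x hx).1
  · exact en_sq_le_of_norm_le (hK x hx).2
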